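/- arXiv:quant-ph/0405184 — 7 statements merged into one kernel-verified Lean document; each statement's English description precedes it below -/
import Mathlib

section
/- Let (X,d) be a metric space, y ∈ X, and let ν be a Borel probability measure on X. Then the distance between the point measure δ_y and ν satisfies d(δ_y, ν) = ∫ d(x,y) dν(x), as an equality of extended nonnegative reals (both sides may be +∞). -/
open MeasureTheory
open scoped ENNReal

/-- The Lipschitz ball of a metric space: bounded functions with Lipschitz constant 1. -/
def LipschitzBall (X : Type*) [MetricSpace X] : Set (X → ℝ) :=
  {f | (∃ C, ∀ z, |f z| ≤ C) ∧ ∀ z w, |f z - f w| ≤ dist z w}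

/-- For a point measure `δ_y` and a Borel probability measure `ν`,
`d(δ_y, ν) = ∫ d(x,y) dν(x)` as extended nonnegative reals. -/
theorem dist_dirac_measure {X : Type*} [MetricSpace X] [MeasurableSpace X] [BorelSpace X]
    (y : X) (ν : Measure X) [IsProbabilityMeasure ν] :
    (⨆ f : LipschitzBall X, ENNReal.ofReal |f.1 y - ∫ x, f.1 x ∂ν|)
      = ∫⁻ x, ENNReal.ofReal (dist x y) ∂ν := by
  apply le_antisymm
  · refine iSup_le ?_
    rintro ⟨f, ⟨C, hC⟩, hf⟩
    have hcont : Continuous f := by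
      have hL : LipschitzWith 1 f := LipschitzWith.of_dist_le_mul (fun z w => by
        rw [Real.dist_eq]; simpa using hf z w)
      exact hL.continuous
    have hint : Integrable f ν :=
      Integrable.of_bound hcont.measurable.aestronglyMeasurable C
        (Filter.Eventually.of_forall fun z => by simpa using hC z)
    have heq : f y - ∫ x, f x ∂ν = ∫ x, (f y - f x) ∂ν := by
      rw [integral_sub (integrable_const _) hint]; simp
    show ENNReal.ofReal |f y - ∫ x, f x ∂ν| ≤ _
    rw [heq, ← Real.norm_eq_abs, ofReal_norm_eq_enorm]
    refine (enorm_integral_le_lintegral_enorm _).trans (lintegral_mono fun x => ?_)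
    rw [← ofReal_norm_eq_enorm, Real.norm_eq_abs, dist_comm]
    exact ENNReal.ofReal_le_ofReal (hf y x)
  · have hm : Continuous fun x : X => dist x y := by fun_prop
    have hsup : ∀ x : X, ENNReal.ofReal (dist x y)
        = ⨆ n : ℕ, ENNReal.ofReal (min (dist x y) n) := by
      intro x
      apply le_antisymm
      · obtain ⟨n, hn⟩ := exists_nat_ge (dist x y)
        refine le_iSup_of_le n ?_
        rw [min_eq_left hn]
      · exact iSup_le fun n => ENNReal.ofReal_le_ofReal (min_le_left _ _)
    simp_rw [hsup]
    have hc : ∀ n : ℕ, Continuous fun x : X => min (dist x y) (n : ℝ) := fun n => by fun_prop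
    rw [lintegral_iSup (fun n => (hc n).measurable.ennreal_ofReal)
      (fun n m hnm x => ENNReal.ofReal_le_ofReal
        (min_le_min le_rfl (by exact_mod_cast hnm)))]
    refine iSup_le fun n => ?_
    have h0 : ∀ x : X, 0 ≤ min (dist x y) (n : ℝ) := fun x =>
      le_min dist_nonneg (Nat.cast_nonneg n)
    have hmem : (fun x : X => min (dist x y) (n : ℝ)) ∈ LipschitzBall X := by
      refine ⟨⟨n, fun z => ?_⟩, fun z w => ?_⟩
      · rw [abs_of_nonneg (h0 z)]; exact min_le_right _ _
      · refine (abs_min_sub_min_le_max _ _ _ _).trans ?_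
        simpa using abs_dist_sub_le z w y
    have hint : Integrable (fun x : X => min (dist x y) (n : ℝ)) ν :=
      Integrable.of_bound (hc n).measurable.aestronglyMeasurable n
        (Filter.Eventually.of_forall fun z => by
          rw [Real.norm_eq_abs]
          rw [abs_of_nonneg (h0 z)]; exact min_le_right _ _)
    refine le_iSup_of_le ⟨_, hmem⟩ ?_
    rw [← ofReal_integral_eq_lintegral_ofReal hint (Filter.Eventually.of_forall h0)]
    apply ENNReal.ofReal_le_ofReal
    show _ ≤ |min (dist y y) (n : ℝ) - ∫ x, min (dist x y) (n : ℝ) ∂ν|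
    rw [dist_self, min_eq_left (Nat.cast_nonneg n), zero_sub, abs_neg]
    exact le_abs_self _
end

section
/- Let μ₁ and μ₂ be Borel probability measures on ℝ (with the standard metric |x − y|), and let F_i(t) = μ_i((−∞, t]) denote their cumulative distribution functions. Then d(μ₁, μ₂) = ∫_{−∞}^{∞} |F₁(x) − F₂(x)| dx, as an equality of extended nonnegative reals (both sides may be +∞). -/
open MeasureTheory Set
open scoped ENNReal

/-- Fubini: integrating the clamped primitive of `g`. -/
lemma fub_aux (μ : Measure ℝ) [IsProbabilityMeasure μ] (g : ℝ → ℝ) (hg : Measurable g)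
    (hb : ∀ t, |g t| ≤ 1) (a b : ℝ) (hab : a ≤ b) :
    ∫ x, (∫ t in a..(max a (min b x)), g t) ∂μ
      = ∫ t in Ioc a b, g t * (1 - (μ (Iic t)).toReal) := by
  have h1 : ∀ x : ℝ, (∫ t in a..(max a (min b x)), g t)
      = ∫ t in Ioc a b, (Iio x).indicator g t := by
    intro x
    rw [intervalIntegral.integral_of_le (le_max_left _ _), setIntegral_indicator measurableSet_Iio]
    apply setIntegral_congr_set
    have h2 : Ioc a (max a (min b x)) = Ioc a b ∩ Iic x := by
      ext t
      simp only [mem_Ioc, mem_inter_iff, mem_Iic, le_max_iff, le_min_iff]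
      constructor
      · rintro ⟨h, h' | h'⟩
        · linarith
        · exact ⟨⟨h, h'.1⟩, h'.2⟩
      · rintro ⟨⟨h, h'⟩, h''⟩
        exact ⟨h, Or.inr ⟨h', h''⟩⟩
    rw [h2]
    exact (ae_eq_refl _).inter (Iio_ae_eq_Iic (μ := volume) (a := x)).symm
  simp_rw [h1]
  have hm : Measurable (fun p : ℝ × ℝ => (Iio p.1).indicator g p.2) := by
    have : (fun p : ℝ × ℝ => (Iio p.1).indicator g p.2)
        = {p : ℝ × ℝ | p.2 < p.1}.indicator (fun p => g p.2) := by
      ext p; simp [indicator]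
    rw [this]
    exact (hg.comp measurable_snd).indicator (measurableSet_lt measurable_snd measurable_fst)
  rw [integral_integral_swap]
  · apply integral_congr_ae
    refine Filter.Eventually.of_forall fun t => ?_
    have : (fun x : ℝ => (Iio x).indicator g t) = (Ioi t).indicator (fun _ => g t) := by
      ext x; simp [indicator]
    simp only [this]
    rw [integral_indicator measurableSet_Ioi, setIntegral_const, ← compl_Iic,
      probReal_compl_eq_one_sub measurableSet_Iic, smul_eq_mul, mul_comm]
    rfl
  · refine Integrable.of_bound hm.aestronglyMeasurable 1 (Filter.Eventually.of_forall fun p => ?_)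
    simp only [Function.uncurry, indicator, Real.norm_eq_abs]
    split_ifs
    · exact hb _
    · simp

lemma cdf_meas_aux (μ : Measure ℝ) [IsProbabilityMeasure μ] :
    Measurable (fun t => (μ (Iic t)).toReal) := by
  apply Monotone.measurable
  intro s t h
  exact ENNReal.toReal_mono (measure_ne_top _ _) (measure_mono (Iic_subset_Iic.2 h))

lemma bdd_int_aux (g : ℝ → ℝ) (hg : Measurable g) (C : ℝ)
    (hb : ∀ t, |g t| ≤ C) (a b : ℝ) : IntegrableOn g (Ioc a b) :=
  Integrable.of_bound hg.aestronglyMeasurable C (Filter.Eventually.of_forall hb)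

lemma cdf_bd_aux (μ : Measure ℝ) [IsProbabilityMeasure μ] (t : ℝ) :
    0 ≤ (μ (Iic t)).toReal ∧ (μ (Iic t)).toReal ≤ 1 :=
  ⟨ENNReal.toReal_nonneg, measureReal_le_one⟩

lemma diff_aux (μ₁ μ₂ : Measure ℝ) [IsProbabilityMeasure μ₁] [IsProbabilityMeasure μ₂]
    (g : ℝ → ℝ) (hg : Measurable g)
    (hb : ∀ t, |g t| ≤ 1) (a b : ℝ) (hab : a ≤ b) :
    ∫ x, (∫ t in a..(max a (min b x)), g t) ∂μ₁ - ∫ x, (∫ t in a..(max a (min b x)), g t) ∂μ₂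
      = ∫ t in Ioc a b, g t * ((μ₂ (Iic t)).toReal - (μ₁ (Iic t)).toReal) := by
  have key : ∀ (μ : Measure ℝ) [IsProbabilityMeasure μ],
      IntegrableOn (fun t => g t * (1 - (μ (Iic t)).toReal)) (Ioc a b) := by
    intro μ _
    refine bdd_int_aux _ (hg.mul (measurable_const.sub (cdf_meas_aux μ))) 1 (fun t => ?_) a b
    change |g t * (1 - (μ (Iic t)).toReal)| ≤ 1
    rw [abs_mul]
    have := cdf_bd_aux μ t
    exact mul_le_one₀ (hb t) (abs_nonneg _) (abs_le.2 ⟨by linarith, by linarith⟩)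
  rw [fub_aux μ₁ g hg hb a b hab, fub_aux μ₂ g hg hb a b hab, ← integral_sub (key μ₁) (key μ₂)]
  congr 1
  ext t
  ring

lemma clamp_lip_aux (a b x y : ℝ) : |max a (min b x) - max a (min b y)| ≤ |x - y| := by
  refine (abs_max_sub_max_le_max _ _ _ _).trans ?_
  have := abs_min_sub_min_le_max b x b y
  simpa using this

lemma upper_aux (μ₁ μ₂ : Measure ℝ) [IsProbabilityMeasure μ₁] [IsProbabilityMeasure μ₂]
    (f : ℝ → ℝ) (hf : LipschitzWith 1 f) (C : ℝ) (hC : ∀ z, |f z| ≤ C) (a b : ℝ) (hab : a ≤ b) :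
    ENNReal.ofReal |∫ x, f (max a (min b x)) ∂μ₁ - ∫ x, f (max a (min b x)) ∂μ₂|
      ≤ ∫⁻ x, ENNReal.ofReal |(μ₁ (Iic x)).toReal - (μ₂ (Iic x)).toReal| := by
  have hd : ∀ t, |deriv f t| ≤ 1 := fun t => by
    simpa using norm_deriv_le_of_lipschitz (x₀ := t) hf
  have hF : ∀ x, ∫ t in a..(max a (min b x)), deriv f t = f (max a (min b x)) - f a := fun x =>
    (hf.lipschitzOnWith.absolutelyContinuousOnInterval).integral_deriv_eq_sub
  have hi : ∀ (μ : Measure ℝ) [IsProbabilityMeasure μ],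
      Integrable (fun x => f (max a (min b x))) μ := fun μ _ =>
    Integrable.of_bound (hf.continuous.comp (by fun_prop)).aestronglyMeasurable C
      (Filter.Eventually.of_forall fun x => hC _)
  have h := diff_aux μ₁ μ₂ (deriv f) (measurable_deriv f) hd a b hab
  simp_rw [hF] at h
  rw [integral_sub (hi μ₁) (integrable_const _), integral_sub (hi μ₂) (integrable_const _)] at h
  simp only [integral_const, probReal_univ, one_smul, sub_sub_sub_cancel_right] at h
  rw [h, ← Real.enorm_eq_ofReal_abs]
  refine (enorm_integral_le_lintegral_enorm _).trans ?_
  refine le_trans ?_ (setLIntegral_le_lintegral (Ioc a b) _)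
  refine lintegral_mono fun t => ?_
  rw [Real.enorm_eq_ofReal_abs]
  apply ENNReal.ofReal_le_ofReal
  rw [abs_mul, abs_sub_comm (μ₂ (Iic t)).toReal]
  exact mul_le_of_le_one_left (abs_nonneg _) (hd t)

lemma clamp_tendsto_aux (μ : Measure ℝ) [IsProbabilityMeasure μ]
    (f : ℝ → ℝ) (hf : LipschitzWith 1 f) (C : ℝ) (hC : ∀ z, |f z| ≤ C) :
    Filter.Tendsto (fun n : ℕ => ∫ x, f (max (-(n:ℝ)) (min n x)) ∂μ) Filter.atTop
      (nhds (∫ x, f x ∂μ)) := by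
  refine tendsto_integral_of_dominated_convergence (fun _ => C)
    (fun n => (hf.continuous.comp (by fun_prop)).aestronglyMeasurable) (integrable_const _)
    (fun n => Filter.Eventually.of_forall fun x => hC _) (Filter.Eventually.of_forall fun x => ?_)
  apply tendsto_const_nhds.congr'
  obtain ⟨N, hN⟩ := exists_nat_ge |x|
  filter_upwards [Filter.eventually_ge_atTop N] with n hn
  have h : |x| ≤ n := hN.trans (by exact_mod_cast hn)
  have := abs_le.1 h
  rw [min_eq_right this.2, max_eq_right this.1]

lemma lower_aux (μ₁ μ₂ : Measure ℝ) [IsProbabilityMeasure μ₁] [IsProbabilityMeasure μ₂]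
    (a b : ℝ) (hab : a ≤ b) :
    ∫⁻ x in Ioc a b, ENNReal.ofReal |(μ₁ (Iic x)).toReal - (μ₂ (Iic x)).toReal|
      ≤ ⨆ f : LipschitzBall ℝ, ENNReal.ofReal |(∫ x, f.1 x ∂μ₁) - ∫ x, f.1 x ∂μ₂| := by
  classical
  have hm1 := cdf_meas_aux μ₁
  have hm2 := cdf_meas_aux μ₂
  let g : ℝ → ℝ := fun t => if (μ₁ (Iic t)).toReal ≤ (μ₂ (Iic t)).toReal then 1 else -1
  have hg : Measurable g :=
    Measurable.ite (measurableSet_le hm1 hm2) measurable_const measurable_const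
  have hb : ∀ t, |g t| ≤ 1 := fun t => by
    simp only [g]; split_ifs <;> simp
  have hii : ∀ u v, IntervalIntegrable g volume u v := fun u v =>
    ⟨bdd_int_aux g hg 1 hb u v, bdd_int_aux g hg 1 hb v u⟩
  have hle : ∀ u v, |∫ t in u..v, g t| ≤ |v - u| := fun u v => by
    simpa using intervalIntegral.norm_integral_le_of_norm_le_const (a := u) (b := v)
      (C := 1) (f := g) (fun t _ => hb t)
  have hmem : (fun x => ∫ t in a..(max a (min b x)), g t) ∈ LipschitzBall ℝ := by
    refine ⟨⟨b - a, fun z => (hle _ _).trans ?_⟩, fun z w => ?_⟩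
    · rw [abs_of_nonneg (sub_nonneg.2 (le_max_left _ _))]
      exact sub_le_sub_right (max_le hab (min_le_left _ _)) _
    · rw [intervalIntegral.integral_interval_sub_left (hii _ _) (hii _ _), Real.dist_eq]
      exact (hle _ _).trans (clamp_lip_aux a b z w)
  refine le_trans ?_ (le_iSup _ ⟨_, hmem⟩)
  simp only
  rw [diff_aux μ₁ μ₂ g hg hb a b hab]
  have hgm : ∀ t, g t * ((μ₂ (Iic t)).toReal - (μ₁ (Iic t)).toReal)
      = |(μ₁ (Iic t)).toReal - (μ₂ (Iic t)).toReal| := fun t => by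
    simp only [g]
    split_ifs with h
    · rw [abs_of_nonpos (by linarith)]; ring
    · rw [abs_of_nonneg (by linarith)]; ring
  simp_rw [hgm]
  rw [← ofReal_integral_eq_lintegral_ofReal]
  · exact ENNReal.ofReal_le_ofReal (le_abs_self _)
  · refine bdd_int_aux _ (hm1.sub hm2).abs 1 (fun t => ?_) a b
    have := cdf_bd_aux μ₁ t
    have := cdf_bd_aux μ₂ t
    rw [abs_abs]
    change |(μ₁ (Iic t)).toReal - (μ₂ (Iic t)).toReal| ≤ 1
    exact abs_le.2 ⟨by linarith, by linarith⟩
  · exact Filter.Eventually.of_forall fun t => abs_nonneg _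

/-- For Borel probability measures on `ℝ` with distribution functions `F₁, F₂`,
`d(μ₁, μ₂) = ∫ |F₁(x) − F₂(x)| dx` as extended nonnegative reals. -/
theorem dist_eq_integral_cdf (μ₁ μ₂ : Measure ℝ)
    [IsProbabilityMeasure μ₁] [IsProbabilityMeasure μ₂] :
    (⨆ f : LipschitzBall ℝ, ENNReal.ofReal |(∫ x, f.1 x ∂μ₁) - ∫ x, f.1 x ∂μ₂|)
      = ∫⁻ x, ENNReal.ofReal |(μ₁ (Iic x)).toReal - (μ₂ (Iic x)).toReal| := by
  apply le_antisymm
  · refine iSup_le ?_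
    rintro ⟨f, ⟨C, hC⟩, hf⟩
    have hL : LipschitzWith 1 f := LipschitzWith.of_dist_le_mul fun x y => by
      simpa [Real.dist_eq] using hf x y
    have ht := ENNReal.tendsto_ofReal
      ((clamp_tendsto_aux μ₁ f hL C hC).sub (clamp_tendsto_aux μ₂ f hL C hC)).abs
    refine le_of_tendsto' ht fun n => upper_aux μ₁ μ₂ f hL C hC _ _ ?_
    have : (0:ℝ) ≤ n := n.cast_nonneg
    linarith
  · have hcov : AECover volume Filter.atTop (fun n : ℕ => Ioc (-(n:ℝ)) n) :=
      aecover_Ioc (Filter.tendsto_neg_atTop_atBot.comp tendsto_natCast_atTop_atTop)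
        tendsto_natCast_atTop_atTop
    have ht := hcov.lintegral_tendsto_of_countably_generated
      (f := fun x => ENNReal.ofReal |(μ₁ (Iic x)).toReal - (μ₂ (Iic x)).toReal|)
      ((cdf_meas_aux μ₁).sub (cdf_meas_aux μ₂)).abs.ennreal_ofReal.aemeasurable
    refine le_of_tendsto' ht fun n => lower_aux μ₁ μ₂ _ _ ?_
    have : (0:ℝ) ≤ n := n.cast_nonneg
    linarith
end

section
/- Let μ₁ and μ₂ be Borel probability measures on ℝ with cumulative distribution functions F₁ and F₂, and let f : ℝ → ℝ be continuously differentiable with derivative f′ of compact support. Then ∫f dμ₁ − ∫f dμ₂ = −∫_{−∞}^{∞} (F₁(x) − F₂(x)) f′(x) dx. -/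
open MeasureTheory Set

theorem aux_cdf (μ : Measure ℝ) [IsProbabilityMeasure μ] (f : ℝ → ℝ) (C : ℝ)
    (hi : Integrable (deriv f)) (hC : ∀ y, ∫ x in Ici y, deriv f x = C - f y) :
    Integrable (fun x => (μ (Iic x)).toReal * deriv f x) ∧
      ∫ x, f x ∂μ = C - ∫ x, (μ (Iic x)).toReal * deriv f x := by
  have hS : MeasurableSet {p : ℝ × ℝ | p.1 ≤ p.2} := measurableSet_le measurable_fst measurable_snd
  have hg : Integrable ({p : ℝ × ℝ | p.1 ≤ p.2}.indicator (fun p => deriv f p.2))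
      (μ.prod volume) := (hi.comp_snd μ).indicator hS
  have h1 : ∀ y, ∫ x, {p : ℝ × ℝ | p.1 ≤ p.2}.indicator (fun p => deriv f p.2) (y, x)
      = C - f y := by
    intro y
    rw [← hC y, ← integral_indicator measurableSet_Ici]
    rfl
  have h2 : ∀ x, ∫ y, {p : ℝ × ℝ | p.1 ≤ p.2}.indicator (fun p => deriv f p.2) (y, x) ∂μ
      = (μ (Iic x)).toReal * deriv f x := by
    intro x
    have : (fun y => {p : ℝ × ℝ | p.1 ≤ p.2}.indicator (fun p => deriv f p.2) (y, x))
        = (Iic x).indicator (fun _ => deriv f x) := rfl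
    rw [this, integral_indicator_const _ measurableSet_Iic]
    rfl
  have i1 := hg.integral_prod_left
  have i2 := hg.integral_prod_right
  have e1 := integral_prod _ hg
  have e2 := integral_prod_symm _ hg
  simp only [h1] at i1 e1
  simp only [h2] at i2 e2
  refine ⟨i2, ?_⟩
  have hf : Integrable f μ := by
    have := (integrable_const C (μ := μ)).sub i1
    refine this.congr (Filter.Eventually.of_forall fun x => ?_)
    simp
  rw [← e2, e1, integral_sub (integrable_const C) hf]
  simp

/-- For Borel probability measures `μ₁, μ₂` on `ℝ` with distribution functions
`F₁, F₂`, and `f : ℝ → ℝ` continuously differentiable with derivative of compact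
support, `∫f dμ₁ − ∫f dμ₂ = −∫ (F₁(x) − F₂(x)) f′(x) dx`. -/
theorem integral_sub_eq_neg_integral_cdf_mul_deriv (μ₁ μ₂ : Measure ℝ)
    [IsProbabilityMeasure μ₁] [IsProbabilityMeasure μ₂]
    (f : ℝ → ℝ) (hf : ContDiff ℝ 1 f) (hf' : HasCompactSupport (deriv f)) :
    (∫ x, f x ∂μ₁) - ∫ x, f x ∂μ₂
      = -∫ x, ((μ₁ (Iic x)).toReal - (μ₂ (Iic x)).toReal) * deriv f x := by
  have hi : Integrable (deriv f) :=
    (hf.continuous_deriv le_rfl).integrable_of_hasCompactSupport hf'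
  have hd : ∀ x, HasDerivAt f (deriv f x) x := fun x =>
    (hf.differentiable one_ne_zero x).hasDerivAt
  obtain ⟨C, ht⟩ : ∃ C, Filter.Tendsto f Filter.atTop (nhds C) := ⟨_, tendsto_limUnder_of_hasDerivAt_of_integrableOn_Ioi (a := 0)
    (fun x _ => hd x) hi.integrableOn⟩
  have hC : ∀ y, ∫ x in Ici y, deriv f x = C - f y := fun y => by
    rw [integral_Ici_eq_integral_Ioi]
    exact integral_Ioi_of_hasDerivAt_of_tendsto' (fun x _ => hd x) hi.integrableOn ht
  obtain ⟨a1, b1⟩ := aux_cdf μ₁ f _ hi hC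
  obtain ⟨a2, b2⟩ := aux_cdf μ₂ f _ hi hC
  simp only [sub_mul]
  rw [b1, b2, integral_sub a1 a2]
  ring
end

section
/- Let (X,d) be a nonempty proper metric space (closed balls are compact), and let φ₁, φ₂ be positive linear functionals on the space of bounded continuous real-valued functions on X with φ₁(1) = φ₂(1) = 1. Suppose their distance d(φ₁,φ₂) = sup{|φ₁(f) − φ₂(f)| : f bounded, 1-Lipschitz} is finite, i.e., there is M < ∞ with |φ₁(f) − φ₂(f)| ≤ M for every bounded f with |f(x) − f(y)| ≤ d(x,y) for all x,y. Then φ₁(∞) = φ₂(∞). -/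
open BoundedContinuousFunction

/-- The weight at infinity of a normalized positive linear functional on the
bounded continuous functions of a metric space:
`φ(∞) = 1 − sup{φ(f) : f continuous with compact support, 0 ≤ f ≤ 1}`. -/
noncomputable def weightAtInfty {X : Type*} [MetricSpace X]
    (φ : (X →ᵇ ℝ) →ₗ[ℝ] ℝ) : ℝ :=
  1 - sSup {r | ∃ f : X →ᵇ ℝ, HasCompactSupport ⇑f ∧ (∀ x, 0 ≤ f x ∧ f x ≤ 1) ∧ r = φ f}

theorem weightAux_le {X : Type*} [MetricSpace X] [ProperSpace X] [Nonempty X]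
    (φ₁ φ₂ : (X →ᵇ ℝ) →ₗ[ℝ] ℝ)
    (hpos₁ : ∀ f : X →ᵇ ℝ, (∀ x, 0 ≤ f x) → 0 ≤ φ₁ f)
    (hpos₂ : ∀ f : X →ᵇ ℝ, (∀ x, 0 ≤ f x) → 0 ≤ φ₂ f)
    (hnorm₂ : φ₂ 1 = 1)
    (M : ℝ)
    (hM : ∀ f : X →ᵇ ℝ, (∀ x y, |f x - f y| ≤ dist x y) → |φ₁ f - φ₂ f| ≤ M) :
    weightAtInfty φ₂ ≤ weightAtInfty φ₁ := by
  unfold weightAtInfty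
  apply sub_le_sub_left
  apply csSup_le
  · exact ⟨φ₁ 0, 0, by simpa using HasCompactSupport.zero, by simp, rfl⟩
  rintro r ⟨f, hf, hf01, rfl⟩
  have hM0 : 0 ≤ M := (abs_nonneg _).trans (hM 0 (by simp))
  set T := {r | ∃ f : X →ᵇ ℝ, HasCompactSupport ⇑f ∧ (∀ x, 0 ≤ f x ∧ f x ≤ 1) ∧ r = φ₂ f} with hT
  have hbdd : BddAbove T := by
    refine ⟨1, ?_⟩
    rintro r ⟨g, -, hg, rfl⟩
    have h := hpos₂ (1 - g) (fun x => by simpa using (hg x).2)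
    rw [map_sub, hnorm₂] at h
    linarith
  obtain ⟨x₀⟩ := ‹Nonempty X›
  obtain ⟨R, hR⟩ := hf.isCompact.isBounded.subset_closedBall x₀
  have key : ∀ L : ℝ, 0 < L → L * φ₁ f ≤ L * sSup T + M := by
    intro L hL
    let g : X →ᵇ ℝ := BoundedContinuousFunction.ofNormedAddCommGroup
      (fun x => max 0 (min L (L + R - dist x x₀))) (by fun_prop) L (by
        intro x
        rw [Real.norm_eq_abs, abs_of_nonneg (le_max_left _ _)]
        exact max_le hL.le (min_le_left _ _))
    have hgx : ∀ x, g x = max 0 (min L (L + R - dist x x₀)) := fun x => rfl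
    have hgL : ∀ x, g x ≤ L := fun x => by
      rw [hgx]; exact max_le hL.le (min_le_left _ _)
    have hg0 : ∀ x, 0 ≤ g x := fun x => le_max_left _ _
    have hlip : ∀ x y, |g x - g y| ≤ dist x y := by
      intro x y
      rw [hgx, hgx]
      have h1 := abs_max_sub_max_le_abs (min L (L + R - dist x x₀)) (min L (L + R - dist y x₀)) 0
      have h2 := abs_min_sub_min_le_max L (L + R - dist x x₀) L (L + R - dist y x₀)
      have h3 := abs_dist_sub_le x y x₀
      rw [max_comm 0, max_comm 0]
      refine h1.trans (h2.trans (max_le (by simp) ?_))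
      rw [show L + R - dist x x₀ - (L + R - dist y x₀) = -(dist x x₀ - dist y x₀) by ring, abs_neg]
      exact h3
    have hcs : HasCompactSupport ⇑g := by
      refine HasCompactSupport.intro (isCompact_closedBall x₀ (L + R)) ?_
      intro x hx
      rw [Metric.mem_closedBall, not_le] at hx
      rw [hgx]
      exact max_eq_left ((min_le_right _ _).trans (by linarith))
    have hfg : ∀ x, L * f x ≤ g x := by
      intro x
      by_cases hx : x ∈ tsupport f
      · have := Metric.mem_closedBall.1 (hR hx)
        have h1 : g x = L := by
          rw [hgx, min_eq_left (by linarith), max_eq_right hL.le]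
        rw [h1]
        nlinarith [(hf01 x).2]
      · rw [image_eq_zero_of_notMem_tsupport hx, mul_zero]
        exact hg0 x
    have h1 := hpos₁ (g - L • f) (fun x => by simpa using hfg x)
    rw [map_sub, map_smul, smul_eq_mul] at h1
    have h2 := (abs_le.1 (hM g hlip)).2
    have h3 : φ₂ (L⁻¹ • g) ≤ sSup T := by
      refine le_csSup hbdd ⟨L⁻¹ • g, ?_, ?_, rfl⟩
      · refine hcs.mono ?_
        intro x hx hx'
        exact hx (by simp [hx'])
      · intro x
        have e : (L⁻¹ • g) x = L⁻¹ * g x := rfl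
        rw [e]
        refine ⟨mul_nonneg (inv_nonneg.2 hL.le) (hg0 x), ?_⟩
        rw [inv_mul_le_iff₀ hL, mul_one]
        exact hgL x
    rw [map_smul, smul_eq_mul, inv_mul_le_iff₀ hL] at h3
    linarith
  by_contra! hlt
  have hd : 0 < φ₁ f - sSup T := by linarith
  have h := key ((M + 1) / (φ₁ f - sSup T)) (by positivity)
  have h' : (M + 1) / (φ₁ f - sSup T) * (φ₁ f - sSup T) = M + 1 := div_mul_cancel₀ _ hd.ne'
  rw [mul_sub] at h'
  linarith

/-- Two normalized positive linear functionals on the bounded continuous functions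
of a nonempty proper metric space which are at finite distance (their values on
bounded `1`-Lipschitz functions differ by at most some `M`) have the same weight
at infinity. -/
theorem weightAtInfty_eq_of_finite_dist {X : Type*} [MetricSpace X] [ProperSpace X] [Nonempty X]
    (φ₁ φ₂ : (X →ᵇ ℝ) →ₗ[ℝ] ℝ)
    (hpos₁ : ∀ f : X →ᵇ ℝ, (∀ x, 0 ≤ f x) → 0 ≤ φ₁ f)
    (hpos₂ : ∀ f : X →ᵇ ℝ, (∀ x, 0 ≤ f x) → 0 ≤ φ₂ f)
    (hnorm₁ : φ₁ 1 = 1) (hnorm₂ : φ₂ 1 = 1)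
    (M : ℝ)
    (hM : ∀ f : X →ᵇ ℝ, (∀ x y, |f x - f y| ≤ dist x y) → |φ₁ f - φ₂ f| ≤ M) :
    weightAtInfty φ₁ = weightAtInfty φ₂ := by
  apply le_antisymm
  · exact weightAux_le φ₂ φ₁ hpos₂ hpos₁ hnorm₁ M
      (fun f hf => by rw [abs_sub_comm]; exact hM f hf)
  · exact weightAux_le φ₁ φ₂ hpos₁ hpos₂ hnorm₂ M hM
end

section
/- Let (X,d_X) and (Y,d_Y) be nonempty proper metric spaces and equip X × Y with the max metric. Let φ be a positive linear functional on the space of bounded continuous real-valued functions on X × Y with φ(1) = 1, and define its marginals φ₁(f) = φ(f ∘ π_X) for bounded continuous f on X and φ₂(g) = φ(g ∘ π_Y) for bounded continuous g on Y, where π_X, π_Y are the coordinate projections. Then the weights at infinity satisfy φ(∞) ≤ φ₁(∞) + φ₂(∞). In particular, if φ₁(∞) = φ₂(∞) = 0 then φ(∞) = 0. -/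
open BoundedContinuousFunction

/-- For a normalized positive linear functional `φ` on the bounded continuous
functions of a product `X × Y` of nonempty proper metric spaces (with the max
metric), the weight at infinity of `φ` is at most the sum of the weights at
infinity of its two marginals `f ↦ φ(f ∘ π_X)` and `g ↦ φ(g ∘ π_Y)`; in
particular it vanishes when both marginal weights vanish. -/
theorem weightAtInfty_le_sum_marginals {X Y : Type*}
    [MetricSpace X] [ProperSpace X] [Nonempty X]
    [MetricSpace Y] [ProperSpace Y] [Nonempty Y]
    (φ : ((X × Y) →ᵇ ℝ) →ₗ[ℝ] ℝ)
    (hpos : ∀ f : (X × Y) →ᵇ ℝ, (∀ p, 0 ≤ f p) → 0 ≤ φ f) (hnorm : φ 1 = 1) :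
    weightAtInfty φ ≤
        (1 - sSup {r | ∃ f : X →ᵇ ℝ, HasCompactSupport ⇑f ∧ (∀ x, 0 ≤ f x ∧ f x ≤ 1) ∧
            r = φ (f.compContinuous (ContinuousMap.mk Prod.fst continuous_fst))}) +
        (1 - sSup {r | ∃ g : Y →ᵇ ℝ, HasCompactSupport ⇑g ∧ (∀ y, 0 ≤ g y ∧ g y ≤ 1) ∧
            r = φ (g.compContinuous (ContinuousMap.mk Prod.snd continuous_snd))}) ∧
      ((1 - sSup {r | ∃ f : X →ᵇ ℝ, HasCompactSupport ⇑f ∧ (∀ x, 0 ≤ f x ∧ f x ≤ 1) ∧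
            r = φ (f.compContinuous (ContinuousMap.mk Prod.fst continuous_fst))}) = 0 →
       (1 - sSup {r | ∃ g : Y →ᵇ ℝ, HasCompactSupport ⇑g ∧ (∀ y, 0 ≤ g y ∧ g y ≤ 1) ∧
            r = φ (g.compContinuous (ContinuousMap.mk Prod.snd continuous_snd))}) = 0 →
       weightAtInfty φ = 0) := by
  have hmono : ∀ f : (X × Y) →ᵇ ℝ, (∀ p, f p ≤ 1) → φ f ≤ 1 := by
    intro f hf
    have h := hpos (1 - f) (fun p => by simpa using hf p)
    rw [map_sub, hnorm] at h
    linarith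
  have hbdd : BddAbove {r | ∃ f : (X × Y) →ᵇ ℝ, HasCompactSupport ⇑f ∧
      (∀ x, 0 ≤ f x ∧ f x ≤ 1) ∧ r = φ f} := by
    refine ⟨1, ?_⟩
    rintro r ⟨f, -, hf, rfl⟩
    exact hmono f (fun p => (hf p).2)
  have key : ∀ (f : X →ᵇ ℝ) (g : Y →ᵇ ℝ), HasCompactSupport ⇑f → (∀ x, 0 ≤ f x ∧ f x ≤ 1) →
      HasCompactSupport ⇑g → (∀ y, 0 ≤ g y ∧ g y ≤ 1) →
      φ (f.compContinuous (ContinuousMap.mk Prod.fst continuous_fst)) +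
        φ (g.compContinuous (ContinuousMap.mk Prod.snd continuous_snd)) - 1 ≤
      sSup {r | ∃ f : (X × Y) →ᵇ ℝ, HasCompactSupport ⇑f ∧
        (∀ x, 0 ≤ f x ∧ f x ≤ 1) ∧ r = φ f} := by
    intro f g hfc hf hgc hg
    set F := f.compContinuous (ContinuousMap.mk (Prod.fst : X × Y → X) continuous_fst) with hF
    set G := g.compContinuous (ContinuousMap.mk (Prod.snd : X × Y → Y) continuous_snd) with hG
    have hFv : ∀ p, F p = f p.1 := fun p => rfl
    have hGv : ∀ p, G p = g p.2 := fun p => rfl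
    have h1 : φ F + φ G - 1 ≤ φ (F * G) := by
      have h := hpos (1 - F - G + F * G) (fun p => by
        have h2 := mul_nonneg (sub_nonneg.2 (hf p.1).2) (sub_nonneg.2 (hg p.2).2)
        simp only [BoundedContinuousFunction.add_apply, BoundedContinuousFunction.sub_apply,
          BoundedContinuousFunction.mul_apply, BoundedContinuousFunction.coe_one, Pi.one_apply, hFv, hGv]
        linarith)
      rw [map_add, map_sub, map_sub, hnorm] at h
      linarith
    refine h1.trans (le_csSup hbdd ⟨F * G, ?_, ?_, rfl⟩)
    · refine HasCompactSupport.intro (IsCompact.prod hfc hgc) ?_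
      intro p hp
      rw [BoundedContinuousFunction.mul_apply, hFv, hGv]
      by_cases h : p.1 ∈ tsupport f
      · have h2 : p.2 ∉ tsupport g := fun h' => hp ⟨h, h'⟩
        rw [image_eq_zero_of_notMem_tsupport h2, mul_zero]
      · rw [image_eq_zero_of_notMem_tsupport h, zero_mul]
    · intro p
      rw [BoundedContinuousFunction.mul_apply, hFv, hGv]
      exact ⟨mul_nonneg (hf _).1 (hg _).1, mul_le_one₀ (hf _).2 (hg _).1 (hg _).2⟩
  have main : weightAtInfty φ ≤
        (1 - sSup {r | ∃ f : X →ᵇ ℝ, HasCompactSupport ⇑f ∧ (∀ x, 0 ≤ f x ∧ f x ≤ 1) ∧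
            r = φ (f.compContinuous (ContinuousMap.mk Prod.fst continuous_fst))}) +
        (1 - sSup {r | ∃ g : Y →ᵇ ℝ, HasCompactSupport ⇑g ∧ (∀ y, 0 ≤ g y ∧ g y ≤ 1) ∧
            r = φ (g.compContinuous (ContinuousMap.mk Prod.snd continuous_snd))}) := by
    unfold weightAtInfty
    set S := sSup {r | ∃ f : (X × Y) →ᵇ ℝ, HasCompactSupport ⇑f ∧
        (∀ x, 0 ≤ f x ∧ f x ≤ 1) ∧ r = φ f} with hS
    set A := sSup {r | ∃ f : X →ᵇ ℝ, HasCompactSupport ⇑f ∧ (∀ x, 0 ≤ f x ∧ f x ≤ 1) ∧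
            r = φ (f.compContinuous (ContinuousMap.mk Prod.fst continuous_fst))} with hA
    have hB : sSup {r | ∃ g : Y →ᵇ ℝ, HasCompactSupport ⇑g ∧ (∀ y, 0 ≤ g y ∧ g y ≤ 1) ∧
            r = φ (g.compContinuous (ContinuousMap.mk Prod.snd continuous_snd))} ≤ S + 1 - A := by
      refine csSup_le ⟨_, 0, HasCompactSupport.zero, fun _ => by simp, rfl⟩ ?_
      rintro r ⟨g, hgc, hg, rfl⟩
      have hA' : A ≤ S + 1 -
          φ (g.compContinuous (ContinuousMap.mk Prod.snd continuous_snd)) := by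
        refine csSup_le ⟨_, 0, HasCompactSupport.zero, fun _ => by simp, rfl⟩ ?_
        rintro r ⟨f, hfc, hf, rfl⟩
        have := key f g hfc hf hgc hg
        linarith
      linarith
    linarith
  refine ⟨main, fun h1 h2 => le_antisymm (by rw [h1, h2] at main; simpa using main) ?_⟩
  unfold weightAtInfty
  refine sub_nonneg.2 (csSup_le ⟨_, 0, HasCompactSupport.zero, fun _ => by simp, rfl⟩ ?_)
  rintro r ⟨f, -, hf, rfl⟩
  exact hmono f (fun p => (hf p).2)
end

section
/- There exists a constant C > 0 such that for every Schwartz function ψ : ℝ → ℂ with ∫_ℝ |ψ(x)|² dx = 1, the product of absolute first moments of position and momentum satisfies (∫_ℝ |x| |ψ(x)|² dx) · (∫_ℝ |ξ| |ψ̂(ξ)|² dξ) ≥ C, where ψ̂ denotes the Fourier transform of ψ. -/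
open MeasureTheory SchwartzMap
open scoped FourierTransform

lemma aux_integrable_sq (f : SchwartzMap ℝ ℂ) : Integrable (fun x : ℝ => ‖f x‖ ^ 2) := by
  have h := f.memLp 2 (volume : Measure ℝ)
  exact (memLp_two_iff_integrable_sq_norm h.1).1 h

lemma aux_integrable_abs (f : SchwartzMap ℝ ℂ) :
    Integrable (fun x : ℝ => |x| * ‖f x‖ ^ 2) := by
  obtain ⟨C, hC⟩ := f.decay 0 0
  have hC' : ∀ x, ‖f x‖ ≤ C := fun x => by simpa using hC.2 x
  have h := (f.integrable_pow_mul volume 1).mul_const C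
  refine h.mono' ?_ (Filter.Eventually.of_forall fun x => ?_)
  · have := f.continuous
    exact (by fun_prop : Continuous (fun x : ℝ => |x| * ‖f x‖ ^ 2)).aestronglyMeasurable
  · rw [Real.norm_of_nonneg (by positivity), Real.norm_eq_abs, pow_one, sq, ← mul_assoc]
    gcongr
    exact hC' x

lemma aux_fourier_trans (f : SchwartzMap ℝ ℂ) (h ξ : ℝ) :
    𝓕 (fun x => f (x - h)) ξ = Real.fourierChar (-(h * ξ)) • 𝓕 (⇑f) ξ := by
  rw [Real.fourier_real_eq, Real.fourier_real_eq]
  rw [← integral_add_right_eq_self _ h]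
  simp only [add_sub_cancel_right, Circle.smul_def]
  rw [← integral_smul]
  congr 1 with v
  have e : -((v + h) * ξ) = -(h * ξ) + -(v * ξ) := by ring
  rw [e, AddChar.map_add_eq_mul, Circle.coe_mul]
  simp only [smul_eq_mul, mul_assoc]

lemma aux_char (t : ℝ) :
    ‖((Real.fourierChar (-t) : Circle) : ℂ) - 1‖ ^ 2 ≤ 4 * Real.pi * |t| := by
  have e : ((Real.fourierChar (-t) : Circle) : ℂ)
      = Complex.exp (Complex.I * ((-(2 * Real.pi * t) : ℝ) : ℂ)) := by
    rw [Real.fourierChar_apply, mul_comm]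
    push_cast
    ring_nf
  rw [e]
  have h1 := Real.norm_exp_I_mul_ofReal_sub_one_le (x := -(2 * Real.pi * t))
  have h2 : ‖Complex.exp (Complex.I * ((-(2 * Real.pi * t) : ℝ) : ℂ)) - 1‖ ≤ 2 := by
    refine (norm_sub_le _ _).trans ?_
    rw [Complex.norm_exp_I_mul_ofReal]
    norm_num
  rw [Real.norm_eq_abs, abs_neg, abs_mul, abs_of_pos (by positivity : 0 < 2 * Real.pi)] at h1
  have h0 := norm_nonneg (Complex.exp (Complex.I * ((-(2 * Real.pi * t) : ℝ) : ℂ)) - 1)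
  rw [sq]
  calc _ ≤ 2 * (2 * Real.pi * |t|) := mul_le_mul h2 h1 h0 (by norm_num)
    _ = _ := by ring

lemma aux_pointwise (u v : ℂ) (x h : ℝ) (hh : 0 < h) :
    h * (‖u‖ ^ 2 + ‖v‖ ^ 2) ≤
      2 * h * ‖u - v‖ ^ 2 + 8 * (|x - h| * ‖u‖ ^ 2 + |x| * ‖v‖ ^ 2) := by
  have h1 : (‖u‖ - ‖v‖) ^ 2 ≤ ‖u - v‖ ^ 2 := by
    rw [← sq_abs]
    gcongr
    exact abs_norm_sub_norm_le u v
  have h2 : h * (‖u‖ - ‖v‖) ^ 2 ≤ h * ‖u - v‖ ^ 2 := by gcongr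
  have h3 : h ≤ |x| + |x - h| := by
    have := abs_sub_abs_le_abs_sub h x
    cases abs_cases x <;> cases abs_cases (x - h) <;> linarith
  have p1 : 0 ≤ |x| * ‖v‖ ^ 2 := by positivity
  have p2 : 0 ≤ |x - h| * ‖u‖ ^ 2 := by positivity
  rcases le_total (h / 2) |x| with hx | hx
  · have : h / 2 * ‖v‖ ^ 2 ≤ |x| * ‖v‖ ^ 2 := by gcongr
    nlinarith [mul_nonneg hh.le (sq_nonneg (‖u‖ - 2 * ‖v‖))]
  · have : h / 2 * ‖u‖ ^ 2 ≤ |x - h| * ‖u‖ ^ 2 := by gcongr; linarith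
    nlinarith [mul_nonneg hh.le (sq_nonneg (‖v‖ - 2 * ‖u‖))]

lemma aux_main (ψ : SchwartzMap ℝ ℂ) (hψ : (∫ x : ℝ, ‖ψ x‖ ^ 2) = 1) (h : ℝ) (hh : 0 < h) :
    h ≤ 8 * (∫ x : ℝ, |x| * ‖ψ x‖ ^ 2) +
      4 * Real.pi * h ^ 2 * ∫ ξ : ℝ, |ξ| * ‖𝓕 (⇑ψ) ξ‖ ^ 2 := by
  set τ : SchwartzMap ℝ ℂ := ψ.compSubConstCLM ℂ h with hτ
  have hτx : ∀ x, τ x = ψ (x - h) := fun x => rfl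
  have hd : ∫ x, ‖(τ - ψ) x‖ ^ 2 ≤ 4 * Real.pi * h * ∫ ξ : ℝ, |ξ| * ‖𝓕 (⇑ψ) ξ‖ ^ 2 := by
    rw [← SchwartzMap.integral_norm_sq_fourier, ← integral_const_mul]
    refine integral_mono (aux_integrable_sq _) ((aux_integrable_abs (𝓕 ψ)).const_mul _) ?_
    intro ξ
    have e : 𝓕 (τ - ψ) ξ = (((Real.fourierChar (-(h * ξ)) : Circle) : ℂ) - 1) * 𝓕 (⇑ψ) ξ := by
      have e1 : 𝓕 (τ - ψ) = 𝓕 τ - 𝓕 ψ := (FourierTransform.fourierCLM ℂ (SchwartzMap ℝ ℂ)).map_sub τ ψ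
      have e2 : 𝓕 τ ξ = Real.fourierChar (-(h * ξ)) • 𝓕 (⇑ψ) ξ := aux_fourier_trans ψ h ξ
      rw [e1, sub_apply, e2, Circle.smul_def, smul_eq_mul, sub_mul, one_mul]
      rfl
    show ‖𝓕 (τ - ψ) ξ‖ ^ 2 ≤ 4 * Real.pi * h * (|ξ| * ‖𝓕 (⇑ψ) ξ‖ ^ 2)
    rw [e, norm_mul, mul_pow, ← mul_assoc]
    have := aux_char (h * ξ)
    rw [abs_mul, abs_of_pos hh, ← mul_assoc] at this
    gcongr
  have i1 := aux_integrable_sq ψ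
  have i2 := aux_integrable_abs ψ
  have j1 : Integrable (fun x => ‖ψ (x - h)‖ ^ 2) := i1.comp_sub_right h
  have j2 : Integrable (fun x => |x - h| * ‖ψ (x - h)‖ ^ 2) := i2.comp_sub_right h
  have k1 : ∫ x, ‖ψ (x - h)‖ ^ 2 = 1 := by
    rw [← hψ]; exact integral_sub_right_eq_self (fun x => ‖ψ x‖ ^ 2) h
  have k2 : ∫ x, |x - h| * ‖ψ (x - h)‖ ^ 2 = ∫ x, |x| * ‖ψ x‖ ^ 2 :=
    integral_sub_right_eq_self (fun x => |x| * ‖ψ x‖ ^ 2) h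
  have i3 := aux_integrable_sq (τ - ψ)
  have key := integral_mono ((j1.add i1).const_mul h)
    ((i3.const_mul (2 * h)).add ((j2.add i2).const_mul 8))
    (fun x => aux_pointwise (ψ (x - h)) (ψ x) x h hh)
  rw [integral_const_mul, integral_add' j1 i1,
    integral_add' (i3.const_mul (2 * h)) ((j2.add i2).const_mul 8), integral_const_mul,
    integral_const_mul, integral_add' j2 i2, k1, k2, hψ] at key
  nlinarith [mul_le_mul_of_nonneg_left hd hh.le]

/-- There is a constant `C > 0` such that every normalized Schwartz function
`ψ : ℝ → ℂ` satisfies `(∫|x||ψ(x)|²dx)·(∫|ξ||ψ̂(ξ)|²dξ) ≥ C`. -/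
theorem abs_moment_uncertainty :
    ∃ C : ℝ, 0 < C ∧ ∀ ψ : SchwartzMap ℝ ℂ, (∫ x : ℝ, ‖ψ x‖ ^ 2) = 1 →
      C ≤ (∫ x : ℝ, |x| * ‖ψ x‖ ^ 2) * ∫ ξ : ℝ, |ξ| * ‖𝓕 (⇑ψ) ξ‖ ^ 2 := by
  refine ⟨1 / (128 * Real.pi), by positivity, fun ψ hψ => ?_⟩
  have main := aux_main ψ hψ
  have hA : 0 ≤ ∫ x : ℝ, |x| * ‖ψ x‖ ^ 2 := integral_nonneg fun x => by positivity
  have hB : 0 ≤ ∫ ξ : ℝ, |ξ| * ‖𝓕 (⇑ψ) ξ‖ ^ 2 := integral_nonneg fun x => by positivity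
  set A := ∫ x : ℝ, |x| * ‖ψ x‖ ^ 2
  set B := ∫ ξ : ℝ, |ξ| * ‖𝓕 (⇑ψ) ξ‖ ^ 2
  have hpi := Real.pi_pos
  rw [div_le_iff₀ (by positivity)]
  rcases hA.eq_or_lt with h0 | h0
  · exfalso
    have hp : 0 < 4 * Real.pi * B + 1 := by positivity
    have := main (1 / (4 * Real.pi * B + 1)) (by positivity)
    rw [← h0] at this
    field_simp at this
    linarith
  · have := main (16 * A) (by positivity)
    have h2 : A * 1 ≤ A * (A * B * (128 * Real.pi)) := by nlinarith
    exact le_of_mul_le_mul_left h2 h0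
end

section
/- The infimum over normalized Schwartz functions ψ : ℝ → ℂ of the product (∫_ℝ |x| |ψ(x)|² dx) · (∫_ℝ |ξ| |ψ̂(ξ)|² dξ) equals one quarter of the square of the infimum over normalized Schwartz functions ψ of the sum ∫_ℝ |x| |ψ(x)|² dx + ∫_ℝ |ξ| |ψ̂(ξ)|² dξ. (This is the relation C = E₀²/4 between the optimal uncertainty product C and the lowest expectation E₀ of the operator |Q| + |P|, obtained by combining the arithmetic–geometric mean inequality with the dilation symmetry ψ(x) ↦ λ^{1/2}ψ(λx).) -/
open MeasureTheory SchwartzMap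
open scoped FourierTransform

/-- The first moment scales under dilations. -/
lemma moment_dilate (g : ℝ → ℂ) (c l : ℝ) (hl : 0 < l) :
    (∫ x : ℝ, |x| * (c * ‖g (l * x)‖ ^ 2)) = c * (l⁻¹ * l⁻¹) * ∫ x : ℝ, |x| * ‖g x‖ ^ 2 := by
  have h := Measure.integral_comp_mul_left (fun x : ℝ => |x| * ‖g x‖ ^ 2) l
  have h2 : (∫ x : ℝ, |x| * (c * ‖g (l * x)‖ ^ 2))
      = ∫ x : ℝ, (c * l⁻¹) * (|l * x| * ‖g (l * x)‖ ^ 2) := by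
    congr 1
    ext x
    rw [abs_mul, abs_of_pos hl]
    field_simp
  rw [h2, integral_const_mul, h, abs_of_pos (inv_pos.mpr hl), smul_eq_mul]
  ring

lemma fourier_dilate (g : ℝ → ℂ) (c : ℂ) (l : ℝ) (hl : 0 < l) (ξ : ℝ) :
    𝓕 (fun x : ℝ => c * g (l * x)) ξ = c * (l⁻¹ : ℝ) * 𝓕 g (l⁻¹ * ξ) := by
  rw [Real.fourier_real_eq, Real.fourier_real_eq]
  have h := Measure.integral_comp_mul_left
    (fun v : ℝ => Real.fourierChar (-(v * (l⁻¹ * ξ))) • g v) l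
  rw [abs_of_pos (inv_pos.mpr hl)] at h
  have h2 : (∫ v : ℝ, Real.fourierChar (-(v * ξ)) • (c * g (l * v)))
      = ∫ v : ℝ, c * (Real.fourierChar (-(l * v * (l⁻¹ * ξ))) • g (l * v)) := by
    congr 1
    ext v
    have : l * v * (l⁻¹ * ξ) = v * ξ := by field_simp
    rw [this, Circle.smul_def, Circle.smul_def, smul_eq_mul, smul_eq_mul]
    ring
  rw [h2, integral_const_mul, h, Complex.real_smul]
  ring

lemma exists_dilate (ψ : SchwartzMap ℝ ℂ) (hψ : (∫ x : ℝ, ‖ψ x‖ ^ 2) = 1) (l : ℝ) (hl : 0 < l) :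
    ∃ φ : SchwartzMap ℝ ℂ, (∫ x : ℝ, ‖φ x‖ ^ 2) = 1 ∧
      (∫ x : ℝ, |x| * ‖φ x‖ ^ 2) = l⁻¹ * (∫ x : ℝ, |x| * ‖ψ x‖ ^ 2) ∧
      (∫ x : ℝ, |x| * ‖𝓕 (⇑φ) x‖ ^ 2) = l * (∫ x : ℝ, |x| * ‖𝓕 (⇑ψ) x‖ ^ 2) := by
  let e : ℝ ≃L[ℝ] ℝ := ContinuousLinearEquiv.smulLeft (Units.mk0 l hl.ne')
  let φ : SchwartzMap ℝ ℂ :=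
    ((Real.sqrt l : ℝ) : ℂ) • SchwartzMap.compCLMOfContinuousLinearEquiv ℂ e ψ
  have hφ : ⇑φ = fun x : ℝ => ((Real.sqrt l : ℝ) : ℂ) * ψ (l * x) := by
    ext x
    rfl
  have hn : ∀ z : ℂ, ‖((Real.sqrt l : ℝ) : ℂ) * z‖ ^ 2 = l * ‖z‖ ^ 2 := by
    intro z
    rw [norm_mul, mul_pow, Complex.norm_real, Real.norm_eq_abs, sq_abs, Real.sq_sqrt hl.le]
  refine ⟨φ, ?_, ?_, ?_⟩
  · rw [hφ]
    simp only [hn]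
    rw [integral_const_mul, Measure.integral_comp_mul_left (fun x : ℝ => ‖ψ x‖ ^ 2) l, hψ,
      abs_of_pos (inv_pos.mpr hl), smul_eq_mul]
    field_simp
  · rw [hφ]
    simp only [hn]
    rw [moment_dilate _ _ _ hl]
    field_simp
  · rw [hφ]
    have h3 : ∀ x : ℝ, ‖𝓕 (fun x : ℝ => ((Real.sqrt l : ℝ) : ℂ) * ψ (l * x)) x‖ ^ 2
        = (l * l⁻¹ ^ 2) * ‖𝓕 (⇑ψ) (l⁻¹ * x)‖ ^ 2 := by
      intro x
      rw [fourier_dilate _ _ _ hl, mul_assoc, hn, norm_mul, mul_pow, Complex.norm_real,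
        Real.norm_eq_abs, sq_abs, mul_assoc]
    simp only [h3]
    have h := moment_dilate (𝓕 (⇑ψ)) (l * l⁻¹ ^ 2) l⁻¹ (inv_pos.mpr hl)
    rw [h]
    field_simp

/-- The optimal uncertainty product for absolute first moments:
`inf_ψ (∫|x||ψ|²)·(∫|ξ||ψ̂|²) = (inf_ψ (∫|x||ψ|² + ∫|ξ||ψ̂|²))² / 4`,
the infima being over normalized Schwartz functions (the relation `C = E₀²/4`). -/
theorem uncertainty_product_eq_quarter_sq :
    sInf {E : ℝ | ∃ ψ : SchwartzMap ℝ ℂ, (∫ x : ℝ, ‖ψ x‖ ^ 2) = 1 ∧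
        E = (∫ x : ℝ, |x| * ‖ψ x‖ ^ 2) * ∫ ξ : ℝ, |ξ| * ‖𝓕 (⇑ψ) ξ‖ ^ 2}
      = (sInf {E : ℝ | ∃ ψ : SchwartzMap ℝ ℂ, (∫ x : ℝ, ‖ψ x‖ ^ 2) = 1 ∧
          E = (∫ x : ℝ, |x| * ‖ψ x‖ ^ 2) + ∫ ξ : ℝ, |ξ| * ‖𝓕 (⇑ψ) ξ‖ ^ 2}) ^ 2 / 4 := by
  have hnn : ∀ g : ℝ → ℂ, 0 ≤ ∫ x : ℝ, |x| * ‖g x‖ ^ 2 :=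
    fun g => integral_nonneg fun x => by positivity
  set P := {E : ℝ | ∃ ψ : SchwartzMap ℝ ℂ, (∫ x : ℝ, ‖ψ x‖ ^ 2) = 1 ∧
        E = (∫ x : ℝ, |x| * ‖ψ x‖ ^ 2) * ∫ ξ : ℝ, |ξ| * ‖𝓕 (⇑ψ) ξ‖ ^ 2} with hP
  set S := {E : ℝ | ∃ ψ : SchwartzMap ℝ ℂ, (∫ x : ℝ, ‖ψ x‖ ^ 2) = 1 ∧
          E = (∫ x : ℝ, |x| * ‖ψ x‖ ^ 2) + ∫ ξ : ℝ, |ξ| * ‖𝓕 (⇑ψ) ξ‖ ^ 2} with hS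
  have hP0 : ∀ p ∈ P, 0 ≤ p := by
    rintro _ ⟨ψ, -, rfl⟩
    exact mul_nonneg (hnn _) (hnn _)
  have hS0 : ∀ p ∈ S, 0 ≤ p := by
    rintro _ ⟨ψ, -, rfl⟩
    exact add_nonneg (hnn _) (hnn _)
  have hPb : BddBelow P := ⟨0, hP0⟩
  have hSb : BddBelow S := ⟨0, hS0⟩
  have hsP : 0 ≤ sInf P := Real.sInf_nonneg hP0
  have hsS : 0 ≤ sInf S := Real.sInf_nonneg hS0
  by_cases hex : ∃ ψ : SchwartzMap ℝ ℂ, (∫ x : ℝ, ‖ψ x‖ ^ 2) = 1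
  · obtain ⟨ψ₀, h₀⟩ := hex
    have hPne : P.Nonempty := ⟨_, ψ₀, h₀, rfl⟩
    have hSne : S.Nonempty := ⟨_, ψ₀, h₀, rfl⟩
    apply le_antisymm
    · have key : 2 * Real.sqrt (sInf P) ≤ sInf S := by
        apply le_csInf hSne
        rintro _ ⟨ψ, h, rfl⟩
        have h1 := csInf_le hPb (show _ ∈ P from ⟨ψ, h, rfl⟩)
        have hA := hnn ψ
        have hB := hnn (𝓕 (⇑ψ))
        generalize (∫ x : ℝ, |x| * ‖ψ x‖ ^ 2) = A at *
        generalize (∫ x : ℝ, |x| * ‖𝓕 (⇑ψ) x‖ ^ 2) = B at *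
        have : Real.sqrt (sInf P) ≤ (A + B) / 2 := by
          apply Real.sqrt_le_iff.mpr
          constructor
          · positivity
          · nlinarith [sq_nonneg (A - B)]
        linarith
      have hq := Real.sq_sqrt hsP
      have hq0 := Real.sqrt_nonneg (sInf P)
      nlinarith
    · apply le_csInf hPne
      rintro _ ⟨ψ, h, rfl⟩
      have hl : ∀ l : ℝ, 0 < l → sInf S ≤ l⁻¹ * (∫ x : ℝ, |x| * ‖ψ x‖ ^ 2)
          + l * (∫ x : ℝ, |x| * ‖𝓕 (⇑ψ) x‖ ^ 2) := by
        intro l hl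
        obtain ⟨φ, hφ, h1, h2⟩ := exists_dilate ψ h l hl
        rw [← h1, ← h2]
        exact csInf_le hSb ⟨φ, hφ, rfl⟩
      have hA := hnn ψ
      have hB := hnn (𝓕 (⇑ψ))
      generalize (∫ x : ℝ, |x| * ‖ψ x‖ ^ 2) = A at *
      generalize (∫ x : ℝ, |x| * ‖𝓕 (⇑ψ) x‖ ^ 2) = B at *
      have hd : discrim B (-sInf S) A ≤ 0 := by
        apply discrim_le_zero
        intro l
        rcases le_or_gt l 0 with h0 | h0
        · have := mul_nonneg hB (mul_self_nonneg l)
          have := mul_nonneg hsS (neg_nonneg.mpr h0)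
          linarith
        · have h3 := mul_le_mul_of_nonneg_left (hl l h0) h0.le
          have h4 : l * (l⁻¹ * A + l * B) = A + B * (l * l) := by field_simp
          linarith
      unfold discrim at hd
      linarith
  · have hPe : P = ∅ := by
      ext p
      simp only [hP, Set.mem_ofPred_eq, Set.mem_empty_iff_false, iff_false]
      rintro ⟨ψ, h, -⟩
      exact hex ⟨ψ, h⟩
    have hSe : S = ∅ := by
      ext p
      simp only [hS, Set.mem_ofPred_eq, Set.mem_empty_iff_false, iff_false]
      rintro ⟨ψ, h, -⟩
      exact hex ⟨ψ, h⟩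
    rw [hPe, hSe]
    simp
end
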